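/- Let p be a prime, S a commutative ring of characteristic p, and R = S[T, T₁₁, T₁₂, T₂₂] the polynomial ring in four variables. For ij ∈ {11, 12, 22} let D_ij : R → R be the S-linear operator D_ij(f) = (T_ij + 1)·∂f/∂T_ij. Define Θ₁(f) = T²·D₁₁(f) − T·D₁₂(f) + D₂₂(f), Θ₂(f) = 2T^{p+1}·D₁₁(f) − (T + T^p)·D₁₂(f) + 2·D₂₂(f), and Θ₃(f) = T^{2p}·D₁₁(f) − T^p·D₁₂(f) + D₂₂(f). Then 4·(Θ₁ ∘ Θ₃) − Θ₂ ∘ Θ₂ equals multiplication by (T − T^p)² composed with the operator 4·(D₁₁ ∘ D₂₂) − D₁₂ ∘ D₁₂; that is, for every f ∈ R, 4·Θ₁(Θ₃(f)) − Θ₂(Θ₂(f)) = (T − T^p)²·(4·D₁₁(D₂₂(f)) − D₁₂(D₁₂(f))). -/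

import Mathlib

open MvPolynomial

/-- The operator `D_ij : f ↦ (T_ij + 1)·∂f/∂T_ij` on `S[T, T₁₁, T₁₂, T₂₂]`,
with the variables indexed by `Fin 4` as `0 ↦ T`, `1 ↦ T₁₁`, `2 ↦ T₁₂`, `3 ↦ T₂₂`. -/
noncomputable def Dij {S : Type*} [CommRing S] (i : Fin 4) (f : MvPolynomial (Fin 4) S) :
    MvPolynomial (Fin 4) S :=
  (X i + 1) * pderiv i f

/-- `Θ₁ f = T²·D₁₁ f − T·D₁₂ f + D₂₂ f`. -/
noncomputable def Theta1 {S : Type*} [CommRing S] (f : MvPolynomial (Fin 4) S) :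
    MvPolynomial (Fin 4) S :=
  X 0 ^ 2 * Dij 1 f - X 0 * Dij 2 f + Dij 3 f

/-- `Θ₂ f = 2T^{p+1}·D₁₁ f − (T + T^p)·D₁₂ f + 2·D₂₂ f`. -/
noncomputable def Theta2 {S : Type*} [CommRing S] (p : ℕ) (f : MvPolynomial (Fin 4) S) :
    MvPolynomial (Fin 4) S :=
  2 * X 0 ^ (p + 1) * Dij 1 f - (X 0 + X 0 ^ p) * Dij 2 f + 2 * Dij 3 f

/-- `Θ₃ f = T^{2p}·D₁₁ f − T^p·D₁₂ f + D₂₂ f`. -/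
noncomputable def Theta3 {S : Type*} [CommRing S] (p : ℕ) (f : MvPolynomial (Fin 4) S) :
    MvPolynomial (Fin 4) S :=
  X 0 ^ (2 * p) * Dij 1 f - X 0 ^ p * Dij 2 f + Dij 3 f

/-- `θ₄⁽ᴺ⁾ f = (T − T^p)·∂f/∂T + N·f`. -/
noncomputable def theta4 {S : Type*} [CommRing S] (p : ℕ) (N : ℤ) (f : MvPolynomial (Fin 4) S) :
    MvPolynomial (Fin 4) S :=
  (X 0 - X 0 ^ p) * pderiv 0 f + (N : MvPolynomial (Fin 4) S) * f

/-!
Write `q(x, y) = D₁₁ x² - D₁₂ x y + D₂₂ y²` for the binary quadratic form whose coefficients are the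
pairwise commuting operators `D_ij`, and `B` for its polar form. Then `Θ₁ = q(T, 1)`,
`Θ₃ = q(T^p, 1)` and `Θ₂ = B((T, 1), (T^p, 1))`. The operators annihilate `T`, so these values
compose as in a commutative ring, and the claim becomes the Gram determinant identity
`4 q(v) q(w) - B(v, w)² = det(v, w)² (4 D₁₁ D₂₂ - D₁₂²)`.
-/

section CommutingDerivations

variable {S A : Type*} [CommRing S] [CommRing A] [Algebra S A]

/-- The value at `(a, 1)` of the binary quadratic form `δ₀ x² - δ₁ x y + δ₂ y²` whose coefficients
are derivations; it specializes to `Θ₁` and `Θ₃`. -/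
def quadraticDerivation (δ : Fin 3 → Derivation S A A) (a : A) : Derivation S A A :=
  a ^ 2 • δ 0 - a • δ 1 + δ 2

/-- The value at `(a, 1)`, `(b, 1)` of the polar form of `δ₀ x² - δ₁ x y + δ₂ y²`, normalized so
that its value on the diagonal is twice `quadraticDerivation`; it specializes to `Θ₂`. -/
def polarDerivation (δ : Fin 3 → Derivation S A A) (a b : A) : Derivation S A A :=
  (2 * (a * b)) • δ 0 - (a + b) • δ 1 + 2 • δ 2

theorem derivation_apply_comm_of_lie_eq_zero {D E : Derivation S A A} (h : ⁅D, E⁆ = 0) (f : A) :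
    D (E f) = E (D f) := by
  rw [← sub_eq_zero, ← Derivation.commutator_apply, h, Derivation.zero_apply]

theorem derivation_mul_of_apply_eq_zero (D : Derivation S A A) {c : A} (hc : D c = 0) (f : A) :
    D (c * f) = c * D f := by
  rw [D.leibniz, hc, smul_zero, add_zero, smul_eq_mul]

theorem derivation_pow_of_apply_eq_zero (D : Derivation S A A) {c : A} (hc : D c = 0)
    (n : ℕ) : D (c ^ n) = 0 := by
  rw [D.leibniz_pow, hc, smul_zero, smul_zero]

variable {δ : Fin 3 → Derivation S A A} {a b : A}

theorem quadraticDerivation_apply (f : A) :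
    quadraticDerivation δ a f = a ^ 2 * δ 0 f - a * δ 1 f + δ 2 f :=
  rfl

theorem polarDerivation_apply (f : A) :
    polarDerivation δ a b f = 2 * (a * b) * δ 0 f - (a + b) * δ 1 f + 2 * δ 2 f := by
  simp only [polarDerivation, Derivation.add_apply, Derivation.sub_apply, Derivation.smul_apply,
    smul_eq_mul, nsmul_eq_mul, Nat.cast_ofNat]

theorem derivation_quadraticDerivation (D : Derivation S A A) (ha : D a = 0) (f : A) :
    D (quadraticDerivation δ a f) = a ^ 2 * D (δ 0 f) - a * D (δ 1 f) + D (δ 2 f) := by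
  simp only [quadraticDerivation_apply, map_add, map_sub, derivation_mul_of_apply_eq_zero D ha,
    derivation_mul_of_apply_eq_zero D (derivation_pow_of_apply_eq_zero D ha 2)]

theorem derivation_polarDerivation (D : Derivation S A A) (ha : D a = 0) (hb : D b = 0) (f : A) :
    D (polarDerivation δ a b f) =
      2 * (a * b) * D (δ 0 f) - (a + b) * D (δ 1 f) + 2 * D (δ 2 f) := by
  have h_two : D 2 = 0 := mod_cast D.map_natCast 2
  have h_add : D (a + b) = 0 := by rw [map_add, ha, hb, add_zero]
  have h_mul : D (2 * (a * b)) = 0 := by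
    rw [derivation_mul_of_apply_eq_zero D h_two, derivation_mul_of_apply_eq_zero D ha, hb,
      mul_zero, mul_zero]
  simp only [polarDerivation_apply, map_add, map_sub, derivation_mul_of_apply_eq_zero D h_two,
    derivation_mul_of_apply_eq_zero D h_add, derivation_mul_of_apply_eq_zero D h_mul]

theorem four_mul_quadraticDerivation_comp_sub_polarDerivation_comp
    (hδ : ∀ i j, ⁅δ i, δ j⁆ = 0) (ha : ∀ i, δ i a = 0) (hb : ∀ i, δ i b = 0) (f : A) :
    4 * quadraticDerivation δ a (quadraticDerivation δ b f) -
        polarDerivation δ a b (polarDerivation δ a b f) =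
      (a - b) ^ 2 * (4 * δ 0 (δ 2 f) - δ 1 (δ 1 f)) := by
  have hcomm (i j : Fin 3) : δ i (δ j f) = δ j (δ i f) :=
    derivation_apply_comm_of_lie_eq_zero (hδ i j) f
  rw [quadraticDerivation_apply (quadraticDerivation δ b f),
    polarDerivation_apply (polarDerivation δ a b f)]
  simp only [derivation_quadraticDerivation _ (hb _),
    derivation_polarDerivation _ (ha _) (hb _), hcomm 1 0, hcomm 2 0, hcomm 2 1]
  ring

end CommutingDerivations

section SerreTateDerivation

variable {σ : Type*} (S : Type*) [CommRing S]

/-- The derivation `(Tᵢ + 1)·∂/∂Tᵢ`, which is `q·d/dq` in the multiplicative coordinate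
`q = Tᵢ + 1`. The operator `Dij i` is its underlying function for four variables. -/
noncomputable def serreTateDerivation (i : σ) :
    Derivation S (MvPolynomial σ S) (MvPolynomial σ S) :=
  (X i + 1 : MvPolynomial σ S) • pderiv i

variable {S}

theorem serreTateDerivation_X_self (i : σ) :
    serreTateDerivation S i (X i) = X i + 1 := by
  rw [serreTateDerivation, Derivation.smul_apply, pderiv_X_self, smul_eq_mul, mul_one]

theorem serreTateDerivation_X_of_ne {i j : σ} (h : j ≠ i) :
    serreTateDerivation S i (X j) = 0 := by
  rw [serreTateDerivation, Derivation.smul_apply, pderiv_X_of_ne h, smul_zero]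

theorem lie_serreTateDerivation (i j : σ) :
    ⁅serreTateDerivation S i, serreTateDerivation S j⁆ = 0 := by
  obtain rfl | hij := eq_or_ne i j
  · exact lie_self _
  refine derivation_ext fun k => ?_
  rw [Derivation.commutator_apply, Derivation.zero_apply]
  obtain rfl | hki := eq_or_ne k i
  · simp only [serreTateDerivation_X_self, serreTateDerivation_X_of_ne hij, map_add,
      Derivation.map_one_eq_zero, map_zero, add_zero, sub_zero]
  obtain rfl | hkj := eq_or_ne k j
  · simp only [serreTateDerivation_X_self, serreTateDerivation_X_of_ne hki, map_add,
      Derivation.map_one_eq_zero, map_zero, add_zero, sub_zero]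
  · simp only [serreTateDerivation_X_of_ne hki, serreTateDerivation_X_of_ne hkj, map_zero,
      sub_zero]

end SerreTateDerivation

section ThetaOperators

variable {S : Type*} [CommRing S]

/-- The derivations `D₁₁`, `D₁₂`, `D₂₂`, in this order: the index skips the variable `T = X 0`. -/
noncomputable def siegelDerivation (i : Fin 3) :
    Derivation S (MvPolynomial (Fin 4) S) (MvPolynomial (Fin 4) S) :=
  serreTateDerivation S i.succ

theorem siegelDerivation_X_zero (i : Fin 3) :
    siegelDerivation i (X 0 : MvPolynomial (Fin 4) S) = 0 :=
  serreTateDerivation_X_of_ne (Fin.succ_ne_zero i).symm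

theorem Theta1_eq_quadraticDerivation (f : MvPolynomial (Fin 4) S) :
    Theta1 f = quadraticDerivation siegelDerivation (X 0) f :=
  rfl

theorem Theta2_eq_polarDerivation (p : ℕ) (f : MvPolynomial (Fin 4) S) :
    Theta2 p f = polarDerivation siegelDerivation (X 0) (X 0 ^ p) f := by
  rw [Theta2, polarDerivation_apply, pow_succ']
  rfl

theorem Theta3_eq_quadraticDerivation (p : ℕ) (f : MvPolynomial (Fin 4) S) :
    Theta3 p f = quadraticDerivation siegelDerivation (X 0 ^ p) f := by
  rw [Theta3, mul_comm 2 p, pow_mul]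
  rfl

theorem stmt_15_general (p : ℕ) (f : MvPolynomial (Fin 4) S) :
    4 * Theta1 (Theta3 p f) - Theta2 p (Theta2 p f)
      = (X 0 - X 0 ^ p) ^ 2 * (4 * Dij 1 (Dij 3 f) - Dij 2 (Dij 2 f)) := by
  simp only [Theta1_eq_quadraticDerivation, Theta2_eq_polarDerivation,
    Theta3_eq_quadraticDerivation]
  exact four_mul_quadraticDerivation_comp_sub_polarDerivation_comp
    (fun i j => lie_serreTateDerivation i.succ j.succ) siegelDerivation_X_zero
    (fun i => derivation_pow_of_apply_eq_zero _ (siegelDerivation_X_zero i) p) f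

end ThetaOperators

/-- Let `p` be a prime and `S` a commutative ring of characteristic `p`.  Then
`4·(Θ₁ ∘ Θ₃) − Θ₂ ∘ Θ₂` equals multiplication by `(T − T^p)²` composed with
`4·(D₁₁ ∘ D₂₂) − D₁₂ ∘ D₁₂` on `S[T, T₁₁, T₁₂, T₂₂]`. -/
theorem stmt_15 (p : ℕ) (hp : p.Prime) (S : Type*) [CommRing S] [CharP S p]
    (f : MvPolynomial (Fin 4) S) :
    4 * Theta1 (Theta3 p f) - Theta2 p (Theta2 p f)
      = (X 0 - X 0 ^ p) ^ 2 * (4 * Dij 1 (Dij 3 f) - Dij 2 (Dij 2 f)) :=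
  stmt_15_general p f
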